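/- Let F = X_{2,0}Y_1² + X_{1,1}Y_1Y_2 + X_{0,2}Y_2² and A_F = R/Ann_R(F), where R = K[x_{2,0}, x_{1,1}, x_{0,2}, y_1, y_2]. Let ℓ = a_{2,0}x_{2,0} + a_{1,1}x_{1,1} + a_{0,2}x_{0,2} ∈ [A_F]_1 with (a_{2,0}, a_{1,1}, a_{0,2}) ≠ (0,0,0). Then the Jordan type of ℓ in A_F is P_{ℓ,A_F} = (2⁴, 1⁴) if a_{1,1}² ≠ 4·a_{2,0}·a_{0,2}, and P_{ℓ,A_F} = (2³, 1⁶) if a_{1,1}² = 4·a_{2,0}·a_{0,2}. -/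

import Mathlib

open MvPolynomial

/-- The differential operator `∏_i ∂^{s i}/∂X_i^{s i}` acting on `K[X_i : i ∈ σ]`
(any order of composition gives the same operator, since partial derivatives commute). -/
noncomputable def diffOp {K : Type*} [CommSemiring K] {σ : Type*} [DecidableEq σ]
    (s : σ →₀ ℕ) : Module.End K (MvPolynomial σ K) :=
  (s.support.toList.map fun i =>
    ((MvPolynomial.pderiv i).toLinearMap : Module.End K (MvPolynomial σ K)) ^ s i).prod

/-- The apolarity (differentiation) action `f ∘ F` of a polynomial `f` on a polynomial `F`:
each variable of `f` acts as partial differentiation with respect to the corresponding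
variable of `F`. -/
noncomputable def diffAction {K : Type*} [CommSemiring K] {σ : Type*} [DecidableEq σ]
    (f F : MvPolynomial σ K) : MvPolynomial σ K :=
  ∑ s ∈ f.support, f.coeff s • diffOp s F

/-- The apolar annihilator ideal `Ann(F) = {f : f ∘ F = 0}`.  (This set is already an
ideal, so taking the ideal span does not change it.) -/
noncomputable def annIdeal {K : Type*} [CommSemiring K] {σ : Type*} [DecidableEq σ]
    (F : MvPolynomial σ K) : Ideal (MvPolynomial σ K) :=
  Ideal.span {f | diffAction f F = 0}

/-- The Perazzo threefold form `F = X_{2,0} Y_1² + X_{1,1} Y_1 Y_2 + X_{0,2} Y_2²`,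
with variables indexed by `Fin 5` as `x_{2,0}, x_{1,1}, x_{0,2}, y_1, y_2`. -/
noncomputable def toyPerazzoForm (K : Type*) [CommSemiring K] : MvPolynomial (Fin 5) K :=
  X 0 * X 3 ^ 2 + X 1 * X 3 * X 4 + X 2 * X 4 ^ 2

/-- The linear form `ℓ = a_{2,0} x_{2,0} + a_{1,1} x_{1,1} + a_{0,2} x_{0,2} + b_1 y_1 + b_2 y_2`. -/
noncomputable def toyLinForm {K : Type*} [CommSemiring K]
    (a20 a11 a02 b1 b2 : K) : MvPolynomial (Fin 5) K :=
  C a20 * X 0 + C a11 * X 1 + C a02 * X 2 + C b1 * X 3 + C b2 * X 4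

/-- The rank of the `k`-th power of the multiplication map `×ℓ : A → A`,
as a `K`-linear endomorphism. -/
noncomputable def rkPow {K A : Type*} [Field K] [CommRing A] [Algebra K A]
    (ℓ : A) (k : ℕ) : ℕ :=
  Module.finrank K (LinearMap.range ((LinearMap.mulLeft K ℓ) ^ k))

/-- `ℓ` has Jordan type (in the `K`-algebra `A`) given by the multiplicity function
`mult : ℕ → ℕ`: for every `k ≥ 1`, the number of Jordan blocks of size `k` of the
multiplication map `×ℓ` is `rank(×ℓ^{k-1}) - 2·rank(×ℓ^k) + rank(×ℓ^{k+1})`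
(written additively to avoid truncated subtraction). -/
def IsJordanTypeMult {K A : Type*} [Field K] [CommRing A] [Algebra K A]
    (ℓ : A) (mult : ℕ → ℕ) : Prop :=
  ∀ k : ℕ, 1 ≤ k → rkPow (K := K) ℓ (k - 1) + rkPow (K := K) ℓ (k + 1)
      = mult k + 2 * rkPow (K := K) ℓ k

/-!
Put `q = ℓ ∘ F`, a binary quadratic form in `Y_1, Y_2`.  As `ℓ` only differentiates along the `X`
variables, `ℓ² ∘ F = ℓ ∘ q = 0`, so `×ℓ` squares to zero on `A_F` and its Jordan type is determined
by `dim A_F` and the rank of `×ℓ`.  Since `g ↦ g ∘ F` identifies `A_F` with `R ∘ F`, that rank is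
`dim (R ∘ q)`.  Both dimensions are sums of the values of symmetric Hilbert functions (the
catalecticant pairing `(f, g) ↦ (f g) ∘ F` is symmetric), and therefore depend only on the number of
independent first derivatives: `dim A_F = 1 + 5 + 5 + 1` and `dim (R ∘ q) = 1 + rank q + 1`, where
`rank q` is `2` or `1` according to the discriminant.
-/

section LinearAlgebra

theorem finrank_range_eq_of_ker_eq {R M N N' : Type*} [Ring R] [AddCommGroup M] [Module R M]
    [AddCommGroup N] [Module R N] [AddCommGroup N'] [Module R N'] {f : M →ₗ[R] N} {g : M →ₗ[R] N'}
    (h : LinearMap.ker f = LinearMap.ker g) :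
    Module.finrank R (LinearMap.range f) = Module.finrank R (LinearMap.range g) :=
  (f.quotKerEquivRange.symm ≪≫ₗ Submodule.quotEquivOfEq _ _ h ≪≫ₗ g.quotKerEquivRange).finrank_eq

variable {K V W : Type*} [Field K] [AddCommGroup V] [Module K V] [AddCommGroup W] [Module K W]

theorem finrank_range_flip [FiniteDimensional K V] [FiniteDimensional K W]
    (B : V →ₗ[K] W →ₗ[K] K) :
    Module.finrank K (LinearMap.range B.flip) = Module.finrank K (LinearMap.range B) := by
  have flip_eq : B.flip = B.dualMap ∘ₗ (Module.evalEquiv K W).toLinearMap := rfl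
  rw [flip_eq, LinearMap.range_comp_of_range_eq_top _ (LinearEquiv.range _),
    LinearMap.finrank_range_dualMap_eq_finrank_range]

theorem finrank_iSup_of_iSupIndep {ι : Type*} [Fintype ι] {p : ι → Submodule K V}
    [∀ i, FiniteDimensional K (p i)] (h : iSupIndep p) :
    Module.finrank K ↥(⨆ i, p i) = ∑ i, Module.finrank K (p i) := by
  classical
  rw [Submodule.iSup_eq_range_dfinsupp_lsum,
    LinearMap.finrank_range_of_inj h.dfinsupp_lsum_injective]
  exact Module.finrank_directSum K _

end LinearAlgebra

section JordanType

variable {K A : Type*} [Field K] [CommRing A] [Algebra K A] {ℓ : A}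

theorem rkPow_eq_finrank_range_mulLeft_pow (ℓ : A) (k : ℕ) :
    rkPow (K := K) ℓ k = Module.finrank K (LinearMap.range (LinearMap.mulLeft K (ℓ ^ k))) := by
  rw [rkPow, LinearMap.pow_mulLeft]

theorem isJordanTypeMult_of_sq_eq_zero {r s : ℕ} (hℓ : ℓ ^ 2 = 0)
    (hr : Module.finrank K (LinearMap.range (LinearMap.mulLeft K ℓ)) = r)
    (hs : Module.finrank K A = s + 2 * r) :
    IsJordanTypeMult (K := K) ℓ (fun k => if k = 2 then r else if k = 1 then s else 0) := by
  have rk_zero : rkPow (K := K) ℓ 0 = s + 2 * r := by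
    rw [rkPow_eq_finrank_range_mulLeft_pow, pow_zero, LinearMap.mulLeft_one, LinearMap.range_id,
      finrank_top, hs]
  have rk_one : rkPow (K := K) ℓ 1 = r := by
    rw [rkPow_eq_finrank_range_mulLeft_pow, pow_one, hr]
  have rk_add_two (k : ℕ) : rkPow (K := K) ℓ (k + 2) = 0 := by
    rw [rkPow_eq_finrank_range_mulLeft_pow, pow_add, hℓ, mul_zero, LinearMap.mulLeft_zero_eq_zero,
      LinearMap.range_zero, finrank_bot]
  rintro (_ | _ | _ | k) hk
  · contradiction
  · simp [rk_zero, rk_one, rk_add_two 0]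
  · simp [rk_one, rk_add_two 0, rk_add_two 1]
  · simp [rk_add_two k, rk_add_two (k + 1), rk_add_two (k + 2)]

end JordanType

section ApolarAction

variable {σ K : Type*} [CommSemiring K]

theorem pderiv_comm (i j : σ) (F : MvPolynomial σ K) :
    pderiv i (pderiv j F) = pderiv j (pderiv i F) := by
  classical
  obtain rfl | hij := eq_or_ne i j
  · rfl
  · ext m
    simp only [coeff_pderiv, Finsupp.add_apply, Finsupp.single_eq_of_ne hij,
      Finsupp.single_eq_of_ne hij.symm, add_right_comm m (Finsupp.single j 1), add_zero]
    ring

theorem commute_pderiv (i j : σ) :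
    Commute ((pderiv i).toLinearMap : Module.End K (MvPolynomial σ K)) (pderiv j).toLinearMap :=
  LinearMap.ext (pderiv_comm i j)

open scoped IsMulCommutative in
/-- The apolarity action `f ∘ F` as an algebra homomorphism `f ↦ (F ↦ f ∘ F)`, sending the variable
`X i` to `∂/∂X_i`.  Since `aeval` needs a commutative target, it takes values in the subalgebra
generated by the partial derivatives. -/
noncomputable def apolarAction :
    MvPolynomial σ K →ₐ[K] Module.End K (MvPolynomial σ K) :=
  have : IsMulCommutative
      (Algebra.adjoin K (Set.range fun i : σ => (pderiv (R := K) i).toLinearMap)) :=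
    Algebra.isMulCommutative_adjoin K (Set.forall_mem_range.2 fun i =>
      Set.forall_mem_range.2 (commute_pderiv i))
  (Subalgebra.val _).comp <| aeval fun i : σ =>
    (⟨(pderiv i).toLinearMap, Algebra.subset_adjoin ⟨i, rfl⟩⟩ :
      Algebra.adjoin K (Set.range fun i : σ => (pderiv (R := K) i).toLinearMap))

theorem apolarAction_X (i : σ) :
    apolarAction (X i) = ((pderiv i).toLinearMap : Module.End K (MvPolynomial σ K)) := by
  simp [apolarAction]

theorem apolarAction_X_apply (i : σ) (F : MvPolynomial σ K) :
    apolarAction (X i) F = pderiv i F := by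
  rw [apolarAction_X]; rfl

theorem apolarAction_mul_apply (f g F : MvPolynomial σ K) :
    apolarAction (f * g) F = apolarAction f (apolarAction g F) := by
  rw [map_mul, Module.End.mul_apply]

theorem apolarAction_monomial_one [DecidableEq σ] (s : σ →₀ ℕ) :
    apolarAction (monomial s (1 : K)) = diffOp s := by
  rw [monomial_eq, C_1, one_mul, Finsupp.prod, ← Finset.prod_map_toList, map_list_prod,
    List.map_map, diffOp]
  simp only [Function.comp_def, map_pow, apolarAction_X]

theorem diffAction_eq_apolarAction [DecidableEq σ] (f F : MvPolynomial σ K) :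
    diffAction f F = apolarAction f F := by
  conv_rhs => rw [f.as_sum, map_sum, LinearMap.sum_apply]
  refine Finset.sum_congr rfl fun s _ => ?_
  rw [← mul_one (coeff s f), ← smul_eq_mul, ← smul_monomial, map_smul, apolarAction_monomial_one,
    LinearMap.smul_apply, smul_eq_mul, mul_one]

/-- The linear map `f ↦ f ∘ F`, whose kernel is `Ann(F)`. -/
noncomputable def apolarMap (F : MvPolynomial σ K) : MvPolynomial σ K →ₗ[K] MvPolynomial σ K :=
  apolarAction.toLinearMap.flip F

theorem apolarMap_apply (f F : MvPolynomial σ K) : apolarMap F f = apolarAction f F := rfl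

theorem apolarMap_apolarAction (f g F : MvPolynomial σ K) :
    apolarMap (apolarAction f F) g = apolarMap F (f * g) := by
  rw [apolarMap_apply, apolarMap_apply, mul_comm, apolarAction_mul_apply]

theorem mem_annIdeal_iff [DecidableEq σ] {f F : MvPolynomial σ K} :
    f ∈ annIdeal F ↔ apolarAction f F = 0 := by
  refine ⟨fun hf => ?_, fun hf => Ideal.subset_span ((diffAction_eq_apolarAction f F).trans hf)⟩
  induction hf using Submodule.span_induction with
  | mem f hf => rwa [← diffAction_eq_apolarAction]
  | zero => rw [map_zero, LinearMap.zero_apply]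
  | add f g _ _ hf hg => rw [map_add, LinearMap.add_apply, hf, hg, add_zero]
  | smul f g _ hg => rw [smul_eq_mul, apolarAction_mul_apply, hg, map_zero]

/-- The Macaulay inverse system `R ∘ F` of `F`: the span of `F` and all its iterated partial
derivatives.  As a vector space it is isomorphic to `A_F = R / Ann(F)`. -/
noncomputable def inverseSystem (F : MvPolynomial σ K) : Submodule K (MvPolynomial σ K) :=
  LinearMap.range (apolarMap F)

/-- The piece `R_n ∘ F` of the inverse system spanned by the partial derivatives of order `n`.
For homogeneous `F` its dimension is the value at `n` of the Hilbert function of `A_F`. -/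
noncomputable def apolarPiece (F : MvPolynomial σ K) (n : ℕ) : Submodule K (MvPolynomial σ K) :=
  (homogeneousSubmodule σ K n).map (apolarMap F)

theorem apolarPiece_zero (F : MvPolynomial σ K) : apolarPiece F 0 = K ∙ F := by
  rw [apolarPiece, homogeneousSubmodule_zero, Submodule.one_eq_span, Submodule.map_span,
    Set.image_singleton, apolarMap_apply, map_one, Module.End.one_apply]

theorem map_apolarMap_mul_span_singleton (F x : MvPolynomial σ K)
    (P : Submodule K (MvPolynomial σ K)) :
    (P * (K ∙ x)).map (apolarMap F) = P.map (apolarMap (apolarAction x F)) := by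
  ext G
  simp [Submodule.mem_mul_span_singleton, apolarMap_apolarAction, mul_comm x]

theorem apolarPiece_succ (F : MvPolynomial σ K) (n : ℕ) :
    apolarPiece F (n + 1) = ⨆ i, apolarPiece (pderiv i F) n := by
  rw [apolarPiece, ← homogeneousSubmodule_one_pow, pow_succ, homogeneousSubmodule_one_pow,
    homogeneousSubmodule_one_eq_span_X, Submodule.span_range_eq_iSup, Submodule.mul_iSup,
    Submodule.map_iSup]
  simp only [map_apolarMap_mul_span_singleton, apolarAction_X_apply, apolarPiece]

theorem apolarPiece_one (F : MvPolynomial σ K) :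
    apolarPiece F 1 = Submodule.span K (Set.range fun i => pderiv i F) := by
  simp only [apolarPiece_succ F 0, apolarPiece_zero, Submodule.span_range_eq_iSup]

theorem inverseSystem_eq_iSup_apolarPiece (F : MvPolynomial σ K) :
    inverseSystem F = ⨆ n, apolarPiece F n := by
  let _ := decomposition (σ := σ) (R := K)
  rw [inverseSystem, LinearMap.range_eq_map,
    ← (DirectSum.Decomposition.isInternal (homogeneousSubmodule σ K)).submodule_iSup_eq_top,
    Submodule.map_iSup]
  rfl

end ApolarAction

section HomogeneousForm

variable {σ K : Type*} [CommSemiring K] {F : MvPolynomial σ K} {d : ℕ}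

theorem apolarPiece_le_homogeneousSubmodule (hF : F.IsHomogeneous d) (n : ℕ) :
    apolarPiece F n ≤ homogeneousSubmodule σ K (d - n) := by
  induction n generalizing F d with
  | zero => simpa [apolarPiece_zero] using hF
  | succ n ih =>
    rw [apolarPiece_succ, add_comm, ← Nat.sub_sub]
    exact iSup_le fun i => ih hF.pderiv

theorem isHomogeneous_apolarAction {f : MvPolynomial σ K} {n : ℕ} (hf : f.IsHomogeneous n)
    (hF : F.IsHomogeneous d) : (apolarAction f F).IsHomogeneous (d - n) :=
  apolarPiece_le_homogeneousSubmodule hF n (Submodule.mem_map_of_mem hf)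

theorem eq_C_of_isHomogeneous_zero (hF : F.IsHomogeneous 0) : F = C (coeff 0 F) :=
  totalDegree_eq_zero_iff_eq_C.1 ((totalDegree_zero_iff_isHomogeneous σ).2 hF)

theorem apolarPiece_eq_bot_of_lt (hF : F.IsHomogeneous d) {n : ℕ} (hn : d < n) :
    apolarPiece F n = ⊥ := by
  induction n generalizing F d with
  | zero => contradiction
  | succ n ih =>
    rw [apolarPiece_succ, iSup_eq_bot]
    intro i
    obtain rfl | hd := Nat.eq_zero_or_pos d
    · rw [eq_C_of_isHomogeneous_zero hF, pderiv_C]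
      simp [apolarPiece, apolarMap]
    · exact ih hF.pderiv (by lia)

instance module_finite_homogeneousSubmodule [Finite σ] (n : ℕ) :
    Module.Finite K (homogeneousSubmodule σ K n) :=
  Module.Finite.iff_fg.2 (homogeneousSubmodule_fg σ K n)

instance module_finite_apolarPiece [Finite σ] (F : MvPolynomial σ K) (n : ℕ) :
    Module.Finite K (apolarPiece F n) :=
  inferInstanceAs (Module.Finite K ((homogeneousSubmodule σ K n).map (apolarMap F)))

/-- The catalecticant pairing `(f, g) ↦ (f g) ∘ F` between forms of degree `m` and `n`.  It is meant
for `F` of degree `m + n`, where `(f g) ∘ F` is a constant and is read off as a coefficient. -/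
noncomputable def catalecticant (F : MvPolynomial σ K) (m n : ℕ) :
    homogeneousSubmodule σ K m →ₗ[K] homogeneousSubmodule σ K n →ₗ[K] K :=
  ((LinearMap.mul K (MvPolynomial σ K)).compr₂ (lcoeff K 0 ∘ₗ apolarMap F)).domRestrict₁₂ _ _

theorem catalecticant_apply (F : MvPolynomial σ K) {m n : ℕ}
    (f : homogeneousSubmodule σ K m) (g : homogeneousSubmodule σ K n) :
    catalecticant F m n f g = coeff 0 (apolarAction (f * g : MvPolynomial σ K) F) := rfl

theorem catalecticant_flip (F : MvPolynomial σ K) (m n : ℕ) :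
    (catalecticant F m n).flip = catalecticant F n m := by
  ext f g
  rw [LinearMap.flip_apply, catalecticant_apply, catalecticant_apply, mul_comm]

variable [NoZeroDivisors K] [CharZero K]

theorem eq_zero_of_pderiv_eq_zero [Finite σ] (hF : F.IsHomogeneous d) (hd : d ≠ 0)
    (h : ∀ i, pderiv i F = 0) : F = 0 := by
  have := Fintype.ofFinite σ
  have euler := hF.sum_X_mul_pderiv
  simpa [h, hd] using euler.symm

theorem eq_zero_of_apolarPiece_eq_bot [Finite σ] (hF : F.IsHomogeneous d)
    (h : apolarPiece F d = ⊥) : F = 0 := by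
  induction d generalizing F with
  | zero => simpa [apolarPiece_zero] using h
  | succ d ih =>
    rw [apolarPiece_succ, iSup_eq_bot] at h
    exact eq_zero_of_pderiv_eq_zero hF d.succ_ne_zero fun i => ih hF.pderiv (h i)

theorem ker_catalecticant [Finite σ] {m n : ℕ} (hF : F.IsHomogeneous (m + n)) :
    LinearMap.ker (catalecticant F m n) =
      LinearMap.ker ((apolarMap F).domRestrict (homogeneousSubmodule σ K m)) := by
  ext f
  rw [LinearMap.mem_ker, LinearMap.mem_ker, LinearMap.domRestrict_apply, apolarMap_apply]
  refine ⟨fun hf => ?_, fun hf => ?_⟩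
  · have isHomogeneous_fF : (apolarAction (f : MvPolynomial σ K) F).IsHomogeneous n := by
      simpa only [Nat.add_sub_cancel_left] using isHomogeneous_apolarAction f.2 hF
    refine eq_zero_of_apolarPiece_eq_bot isHomogeneous_fF ((Submodule.eq_bot_iff _).2 ?_)
    rintro _ ⟨g, hg, rfl⟩
    have isHomogeneous_gfF :
        (apolarMap (apolarAction (f : MvPolynomial σ K) F) g).IsHomogeneous 0 := by
      simpa only [apolarMap_apply, Nat.sub_self] using
        isHomogeneous_apolarAction hg isHomogeneous_fF
    rw [eq_C_of_isHomogeneous_zero isHomogeneous_gfF, apolarMap_apolarAction, apolarMap_apply,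
      ← catalecticant_apply F f ⟨g, hg⟩, hf, LinearMap.zero_apply, C_0]
  · ext g
    rw [catalecticant_apply, mul_comm, apolarAction_mul_apply, hf, map_zero, coeff_zero,
      LinearMap.zero_apply]

end HomogeneousForm

section HilbertFunction

variable {σ K : Type*} [Field K] {F : MvPolynomial σ K} {d : ℕ}

theorem finrank_inverseSystem [Finite σ] (hF : F.IsHomogeneous d) :
    Module.finrank K (inverseSystem F) =
      ∑ n ∈ Finset.range (d + 1), Module.finrank K (apolarPiece F n) := by
  have eq_iSup_fin : inverseSystem F = ⨆ n : Fin (d + 1), apolarPiece F n := by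
    rw [inverseSystem_eq_iSup_apolarPiece]
    refine le_antisymm (iSup_le fun n => ?_) (iSup_le fun n => le_iSup (apolarPiece F) n)
    obtain hn | hn := Nat.lt_or_ge d n
    · exact (apolarPiece_eq_bot_of_lt hF hn).trans_le bot_le
    · exact le_iSup (fun n : Fin (d + 1) => apolarPiece F n) ⟨n, Nat.lt_succ_of_le hn⟩
  have indep : iSupIndep fun n : Fin (d + 1) => apolarPiece F n := by
    let _ := decomposition (σ := σ) (R := K)
    have codegree_injective : Function.Injective fun n : Fin (d + 1) => d - (n : ℕ) := by
      intro m n hmn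
      lia
    exact ((DirectSum.Decomposition.isInternal (homogeneousSubmodule σ K)).submodule_iSupIndep.comp
      codegree_injective).mono fun n => apolarPiece_le_homogeneousSubmodule hF n
  rw [eq_iSup_fin, finrank_iSup_of_iSupIndep indep,
    Fin.sum_univ_eq_sum_range fun n => Module.finrank K (apolarPiece F n)]

theorem finrank_apolarPiece_zero (hF : F ≠ 0) : Module.finrank K (apolarPiece F 0) = 1 := by
  rw [apolarPiece_zero, finrank_span_singleton hF]

variable [CharZero K]

theorem finrank_range_catalecticant [Finite σ] {m n : ℕ} (hF : F.IsHomogeneous (m + n)) :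
    Module.finrank K (LinearMap.range (catalecticant F m n)) =
      Module.finrank K (apolarPiece F m) := by
  rw [finrank_range_eq_of_ker_eq (ker_catalecticant hF), LinearMap.range_domRestrict, apolarPiece]

theorem finrank_apolarPiece_symm [Finite σ] {m n : ℕ} (hF : F.IsHomogeneous (m + n)) :
    Module.finrank K (apolarPiece F m) = Module.finrank K (apolarPiece F n) := by
  rw [← finrank_range_catalecticant hF, ← finrank_range_flip, catalecticant_flip,
    finrank_range_catalecticant (add_comm m n ▸ hF)]

theorem finrank_inverseSystem_quadric [Finite σ] (hF : F.IsHomogeneous 2) (hF₀ : F ≠ 0) :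
    Module.finrank K (inverseSystem F) = Module.finrank K (apolarPiece F 1) + 2 := by
  have h₀ := finrank_apolarPiece_zero hF₀
  have symm₀₂ := finrank_apolarPiece_symm (m := 0) (n := 2) hF
  simp only [finrank_inverseSystem hF, Finset.sum_range_succ, Finset.sum_range_zero]
  lia

theorem finrank_inverseSystem_cubic [Finite σ] (hF : F.IsHomogeneous 3) (hF₀ : F ≠ 0) :
    Module.finrank K (inverseSystem F) = 2 * Module.finrank K (apolarPiece F 1) + 2 := by
  have h₀ := finrank_apolarPiece_zero hF₀
  have symm₀₃ := finrank_apolarPiece_symm (m := 0) (n := 3) hF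
  have symm₁₂ := finrank_apolarPiece_symm (m := 1) (n := 2) hF
  simp only [finrank_inverseSystem hF, Finset.sum_range_succ, Finset.sum_range_zero]
  lia

end HilbertFunction

section ApolarAlgebra

variable {σ K : Type*} [DecidableEq σ] [CommRing K] (F f : MvPolynomial σ K)

theorem ker_mulLeft_mk_annIdeal :
    LinearMap.ker (LinearMap.mulLeft K (Ideal.Quotient.mk (annIdeal F) f) ∘ₗ
      (Ideal.Quotient.mkₐ K (annIdeal F)).toLinearMap) =
      LinearMap.ker (apolarMap (apolarAction f F)) := by
  ext g
  rw [LinearMap.mem_ker, LinearMap.mem_ker, apolarMap_apolarAction, apolarMap_apply,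
    ← mem_annIdeal_iff, ← Ideal.Quotient.eq_zero_iff_mem, map_mul]
  rfl

theorem finrank_range_mulLeft_mk_annIdeal :
    Module.finrank K (LinearMap.range (LinearMap.mulLeft K (Ideal.Quotient.mk (annIdeal F) f))) =
      Module.finrank K (inverseSystem (apolarAction f F)) := by
  have range_mk : LinearMap.range (Ideal.Quotient.mkₐ K (annIdeal F)).toLinearMap = ⊤ :=
    LinearMap.range_eq_top.2 (Ideal.Quotient.mkₐ_surjective K _)
  rw [← LinearMap.range_comp_of_range_eq_top _ range_mk,
    finrank_range_eq_of_ker_eq (ker_mulLeft_mk_annIdeal F f), inverseSystem]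

theorem finrank_quotient_annIdeal :
    Module.finrank K (MvPolynomial σ K ⧸ annIdeal F) = Module.finrank K (inverseSystem F) := by
  have h := finrank_range_mulLeft_mk_annIdeal F 1
  rwa [map_one, map_one, LinearMap.mulLeft_one, LinearMap.range_id, finrank_top,
    Module.End.one_apply] at h

end ApolarAlgebra

section ToyPerazzoForm

variable {K : Type*} [CommSemiring K]

theorem isHomogeneous_toyPerazzoForm : (toyPerazzoForm K).IsHomogeneous 3 :=
  (((isHomogeneous_X K 0).mul (isHomogeneous_X_pow 3 2)).add
    (((isHomogeneous_X K 1).mul (isHomogeneous_X K 3)).mul (isHomogeneous_X K 4))).add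
    ((isHomogeneous_X K 2).mul (isHomogeneous_X_pow 4 2))

theorem apolarAction_toyLinForm (a b c : K) (G : MvPolynomial (Fin 5) K) :
    apolarAction (toyLinForm a b c 0 0) G =
      C a * pderiv 0 G + C b * pderiv 1 G + C c * pderiv 2 G := by
  simp only [toyLinForm, ← smul_eq_C_mul, zero_smul, add_zero, map_add, map_smul,
    LinearMap.add_apply, LinearMap.smul_apply, apolarAction_X_apply]

/-- The binary quadratic form `ℓ ∘ F = a_{2,0} Y_1² + a_{1,1} Y_1 Y_2 + a_{0,2} Y_2²`. -/
noncomputable def toyQuadric (a20 a11 a02 : K) : MvPolynomial (Fin 5) K :=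
  C a20 * X 3 ^ 2 + C a11 * (X 3 * X 4) + C a02 * X 4 ^ 2

theorem pderiv_toyPerazzoForm :
    (fun i => pderiv i (toyPerazzoForm K)) =
      ![X 3 ^ 2, X 3 * X 4, X 4 ^ 2, X 0 * (2 * X 3) + X 1 * X 4, X 1 * X 3 + X 2 * (2 * X 4)] := by
  funext i
  fin_cases i <;> simp [toyPerazzoForm, pderiv_X, mul_assoc]

theorem pderiv_toyQuadric (a20 a11 a02 : K) :
    (fun i => pderiv i (toyQuadric a20 a11 a02)) =
      ![0, 0, 0, (2 * a20) • X 3 + a11 • X 4, a11 • X 3 + (2 * a02) • X 4] := by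
  have C_two : (C 2 : MvPolynomial (Fin 5) K) = 2 := map_ofNat C 2
  funext i
  fin_cases i <;> simp [toyQuadric, pderiv_X, smul_eq_C_mul, C_two, mul_comm, mul_assoc]

theorem apolarPiece_toyQuadric_one (a20 a11 a02 : K) :
    apolarPiece (toyQuadric a20 a11 a02) 1 = Submodule.span K (Set.range
      ![(2 * a20) • X 3 + a11 • X 4, a11 • X 3 + (2 * a02) • X 4]) := by
  simp [apolarPiece_one, pderiv_toyQuadric, Submodule.span_insert]

theorem apolarAction_toyLinForm_toyPerazzoForm (a20 a11 a02 : K) :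
    apolarAction (toyLinForm a20 a11 a02 0 0) (toyPerazzoForm K) = toyQuadric a20 a11 a02 := by
  simp [apolarAction_toyLinForm, toyPerazzoForm, toyQuadric, pderiv_X, mul_comm]

theorem apolarAction_toyLinForm_toyQuadric (a b c a20 a11 a02 : K) :
    apolarAction (toyLinForm a b c 0 0) (toyQuadric a20 a11 a02) = 0 := by
  simp [apolarAction_toyLinForm, toyQuadric, pderiv_X]

theorem isHomogeneous_toyQuadric (a20 a11 a02 : K) :
    (toyQuadric a20 a11 a02).IsHomogeneous 2 :=
  (((isHomogeneous_X_pow 3 2).C_mul a20).add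
    (((isHomogeneous_X K 3).mul (isHomogeneous_X K 4)).C_mul a11)).add
    ((isHomogeneous_X_pow 4 2).C_mul a02)

theorem toyPerazzoForm_ne_zero [Nontrivial K] : toyPerazzoForm K ≠ 0 := by
  intro h
  simpa [toyPerazzoForm] using congrArg (eval ![1, 0, 0, 1, 0]) h

theorem toyQuadric_ne_zero {a20 a11 a02 : K} (ha : ¬(a20 = 0 ∧ a11 = 0 ∧ a02 = 0)) :
    toyQuadric a20 a11 a02 ≠ 0 := by
  intro h
  have eval_eq_zero (p : Fin 5 → K) :
      a20 * p 3 ^ 2 + a11 * (p 3 * p 4) + a02 * p 4 ^ 2 = 0 := by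
    simpa [toyQuadric] using congrArg (eval p) h
  have h20 : a20 = 0 := by simpa using eval_eq_zero ![0, 0, 0, 1, 0]
  have h02 : a02 = 0 := by simpa using eval_eq_zero ![0, 0, 0, 0, 1]
  have h11 : a11 = 0 := by simpa [h20, h02] using eval_eq_zero ![0, 0, 0, 1, 1]
  exact ha ⟨h20, h11, h02⟩

end ToyPerazzoForm

section ToyPerazzoAlgebra

theorem mk_toyLinForm_sq_eq_zero {R : Type*} [CommRing R] (a20 a11 a02 : R) :
    Ideal.Quotient.mk (annIdeal (toyPerazzoForm R)) (toyLinForm a20 a11 a02 0 0) ^ 2 = 0 := by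
  rw [← map_pow, Ideal.Quotient.eq_zero_iff_mem, mem_annIdeal_iff, sq, apolarAction_mul_apply,
    apolarAction_toyLinForm_toyPerazzoForm, apolarAction_toyLinForm_toyQuadric]

variable {K : Type*} [Field K]

theorem linearIndependent_pderiv_toyQuadric_iff (a20 a11 a02 : K) :
    LinearIndependent K ![(2 * a20) • X 3 + a11 • X 4,
      (a11 • X 3 + (2 * a02) • X 4 : MvPolynomial (Fin 5) K)] ↔ a11 ^ 2 ≠ 4 * a20 * a02 := by
  have indep : LinearIndependent K ![(X 3 : MvPolynomial (Fin 5) K), X 4] := by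
    have eq_comp : ![(X 3 : MvPolynomial (Fin 5) K), X 4] = X ∘ ![3, 4] := by
      ext1 i
      fin_cases i <;> rfl
    exact eq_comp ▸ (linearIndependent_X (Fin 5) K).comp ![3, 4] (by decide)
  rw [LinearIndependent.pair_add_smul_add_smul_iff, and_iff_right indep, ne_comm]
  ring_nf

theorem finrank_apolarPiece_toyQuadric_one_of_ne {a20 a11 a02 : K}
    (h : a11 ^ 2 ≠ 4 * a20 * a02) :
    Module.finrank K (apolarPiece (toyQuadric a20 a11 a02) 1) = 2 := by
  rw [apolarPiece_toyQuadric_one, finrank_span_eq_card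
    ((linearIndependent_pderiv_toyQuadric_iff a20 a11 a02).2 h), Fintype.card_fin]

variable [CharZero K]

theorem linearIndependent_pderiv_toyPerazzoForm :
    LinearIndependent K fun i => pderiv i (toyPerazzoForm K) := by
  rw [pderiv_toyPerazzoForm, Fintype.linearIndependent_iff]
  intro g hg
  have eval_eq_zero (p : Fin 5 → K) : g 0 * p 3 ^ 2 + g 1 * (p 3 * p 4) + g 2 * p 4 ^ 2 +
      g 3 * (p 0 * (2 * p 3) + p 1 * p 4) + g 4 * (p 1 * p 3 + p 2 * (2 * p 4)) = 0 := by
    simpa [Fin.sum_univ_five, smul_eval, mul_add, add_assoc] using congrArg (eval p) hg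
  have g₀ : g 0 = 0 := by simpa using eval_eq_zero ![0, 0, 0, 1, 0]
  have g₂ : g 2 = 0 := by simpa using eval_eq_zero ![0, 0, 0, 0, 1]
  have g₁ : g 1 = 0 := by simpa [g₀, g₂] using eval_eq_zero ![0, 0, 0, 1, 1]
  have g₃ : g 3 = 0 := by simpa [g₀] using eval_eq_zero ![1, 0, 0, 1, 0]
  have g₄ : g 4 = 0 := by simpa [g₂] using eval_eq_zero ![0, 0, 1, 0, 1]
  intro i
  fin_cases i <;> assumption

theorem finrank_quotient_annIdeal_toyPerazzoForm :
    Module.finrank K (MvPolynomial (Fin 5) K ⧸ annIdeal (toyPerazzoForm K)) = 12 := by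
  rw [finrank_quotient_annIdeal,
    finrank_inverseSystem_cubic isHomogeneous_toyPerazzoForm toyPerazzoForm_ne_zero,
    apolarPiece_one, finrank_span_eq_card linearIndependent_pderiv_toyPerazzoForm, Fintype.card_fin]

theorem finrank_apolarPiece_toyQuadric_one_of_eq {a20 a11 a02 : K}
    (ha : ¬(a20 = 0 ∧ a11 = 0 ∧ a02 = 0)) (h : a11 ^ 2 = 4 * a20 * a02) :
    Module.finrank K (apolarPiece (toyQuadric a20 a11 a02) 1) = 1 := by
  have ne_zero : Module.finrank K (apolarPiece (toyQuadric a20 a11 a02) 1) ≠ 0 := by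
    intro h₀
    rw [Submodule.finrank_eq_zero, apolarPiece_one, Submodule.span_eq_bot] at h₀
    exact toyQuadric_ne_zero ha (eq_zero_of_pderiv_eq_zero (isHomogeneous_toyQuadric a20 a11 a02)
      two_ne_zero fun i => h₀ _ ⟨i, rfl⟩)
  rw [apolarPiece_toyQuadric_one] at ne_zero ⊢
  have le_two := finrank_range_le_card (R := K)
    ![(2 * a20) • X 3 + a11 • X 4, (a11 • X 3 + (2 * a02) • X 4 : MvPolynomial (Fin 5) K)]
  have ne_two := linearIndependent_iff_card_eq_finrank_span.not.1
    ((linearIndependent_pderiv_toyQuadric_iff a20 a11 a02).not.2 (not_not.2 h))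
  rw [Set.finrank, Fintype.card_fin] at le_two ne_two
  lia

theorem isJordanTypeMult_toyLinForm_of_finrank {a20 a11 a02 : K} {r s : ℕ}
    (ha : ¬(a20 = 0 ∧ a11 = 0 ∧ a02 = 0))
    (hr : Module.finrank K (apolarPiece (toyQuadric a20 a11 a02) 1) + 2 = r)
    (hs : s + 2 * r = 12) :
    IsJordanTypeMult (K := K)
      (Ideal.Quotient.mk (annIdeal (toyPerazzoForm K)) (toyLinForm a20 a11 a02 0 0))
      (fun k => if k = 2 then r else if k = 1 then s else 0) := by
  refine isJordanTypeMult_of_sq_eq_zero (mk_toyLinForm_sq_eq_zero a20 a11 a02) ?_ ?_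
  · rw [finrank_range_mulLeft_mk_annIdeal, apolarAction_toyLinForm_toyPerazzoForm,
      finrank_inverseSystem_quadric (isHomogeneous_toyQuadric a20 a11 a02) (toyQuadric_ne_zero ha),
      hr]
  · rw [finrank_quotient_annIdeal_toyPerazzoForm, hs]

end ToyPerazzoAlgebra

/-- Example 3.1(c): for `F = X_{2,0}Y_1² + X_{1,1}Y_1Y_2 + X_{0,2}Y_2²` and
`ℓ = a_{2,0}x_{2,0} + a_{1,1}x_{1,1} + a_{0,2}x_{0,2} ≠ 0`, the Jordan type of `ℓ` in
`A_F` is `(2⁴, 1⁴)` if `a_{1,1}² ≠ 4·a_{2,0}·a_{0,2}`, and `(2³, 1⁶)` if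
`a_{1,1}² = 4·a_{2,0}·a_{0,2}`. -/
theorem jordanType_toyPerazzo_min
    (K : Type*) [Field K] [CharZero K] (a20 a11 a02 : K)
    (ha : ¬(a20 = 0 ∧ a11 = 0 ∧ a02 = 0)) :
    (a11 ^ 2 ≠ 4 * a20 * a02 →
      IsJordanTypeMult (K := K)
        (Ideal.Quotient.mk (annIdeal (toyPerazzoForm K)) (toyLinForm a20 a11 a02 0 0))
        (fun k => if k = 2 then 4 else if k = 1 then 4 else 0)) ∧
    (a11 ^ 2 = 4 * a20 * a02 →
      IsJordanTypeMult (K := K)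
        (Ideal.Quotient.mk (annIdeal (toyPerazzoForm K)) (toyLinForm a20 a11 a02 0 0))
        (fun k => if k = 2 then 3 else if k = 1 then 6 else 0)) := by
  constructor <;> intro h
  · exact isJordanTypeMult_toyLinForm_of_finrank ha
      (by rw [finrank_apolarPiece_toyQuadric_one_of_ne h]) rfl
  · exact isJordanTypeMult_toyLinForm_of_finrank ha
      (by rw [finrank_apolarPiece_toyQuadric_one_of_eq ha h]) rfl
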